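/- If (P, ≤) is a partially ordered set whose underlying set is well-orderable, every antichain in P is finite, and every chain in P is countable, then P is countable. -/

import Mathlib

/-!
Let `κ` be regular, and suppose that all chains in `X` have fewer than `κ` elements while `X` has at
least `κ`. Every point outside a maximal chain `M` of `X` is incomparable to some point of `M`, so
by regularity some `x ∈ M` is incomparable to at least `κ` points of `X`. Replacing `X` by the set
of these points and iterating yields an infinite sequence of pairwise incomparable points, that is,
an infinite antichain. Only comparability matters, so `≤` may be replaced by any relation. The
countable case is `κ = ℵ₁`.
-/

open Cardinal Set

theorem exists_seq_forall_lt_of_forall_exists_sep {α : Type*} {p : Set α → Prop} {s : α → α → Prop}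
    {X : Set α} (hX : p X) (hs : ∀ Y, p Y → ∃ x ∈ Y, p {y ∈ Y | s x y}) :
    ∃ x : ℕ → α, ∀ m n, m < n → s (x m) (x n) := by
  choose f hf_mem hf using hs
  let next (Y : {Y // p Y}) : {Y // p Y} := ⟨_, hf Y Y.2⟩
  let S (n : ℕ) : {Y // p Y} := next^[n] ⟨X, hX⟩
  have S_succ (n : ℕ) : S (n + 1) = next (S n) := Function.iterate_succ_apply' _ _ _
  have S_anti : Antitone fun n ↦ (S n : Set α) :=
    antitone_nat_of_succ_le fun n ↦ by rw [S_succ]; exact sep_subset _ _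
  refine ⟨fun n ↦ f (S n) (S n).2, fun m n hmn ↦ ?_⟩
  have hmem : f (S n) (S n).2 ∈ (S (m + 1) : Set α) :=
    S_anti (Nat.succ_le_of_lt hmn) (hf_mem _ _)
  rw [S_succ] at hmem
  exact hmem.2

section Relation

variable {α : Type*} {r : α → α → Prop}

theorem exists_mem_incompRel_of_isMaxChain {M : Set α} (hM : IsMaxChain r M) {y : α} (hy : y ∉ M) :
    ∃ x ∈ M, x ≠ y ∧ IncompRel r x y := by
  by_contra! hcomp
  have hinsert : IsChain r (insert y M) := hM.isChain.insert fun x hx hyx ↦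
    (not_incompRel_iff_symmGen.1 (hcomp x hx hyx.symm)).symm
  have hM_eq : M = insert y M := hM.2 hinsert (subset_insert y M)
  exact hy (hM_eq ▸ mem_insert y M)

theorem infinite_and_isAntichain_range_of_forall_lt {x : ℕ → α}
    (hx : ∀ m n, m < n → x m ≠ x n ∧ IncompRel r (x m) (x n)) :
    (range x).Infinite ∧ IsAntichain r (range x) := by
  have hsymm : Std.Symm fun a b ↦ a ≠ b ∧ IncompRel r a b := ⟨fun _ _ h ↦ ⟨h.1.symm, h.2.symm⟩⟩
  have hpair : Pairwise fun m n ↦ x m ≠ x n ∧ IncompRel r (x m) (x n) :=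
    (hsymm.pairwise_on x).2 hx
  exact ⟨infinite_range_of_injective (Function.injective_iff_pairwise_ne.2
    (hpair.mono fun _ _ h ↦ h.1)), Pairwise.range_pairwise (hpair.mono fun _ _ h ↦ h.2.1)⟩

theorem exists_le_mk_incompRel {κ : Cardinal} (hκ : κ.IsRegular)
    (hchain : ∀ C : Set α, IsChain r C → #C < κ) (hα : κ ≤ #α) :
    ∃ x, κ ≤ #{y | x ≠ y ∧ IncompRel r x y} := by
  by_contra! hsmall
  obtain ⟨M, hM⟩ : ∃ M, IsMaxChain r M := ⟨_, maxChain_spec⟩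
  have hM_lt : #M < κ := hchain M hM.isChain
  have hunion : #(⋃ x ∈ M, {y | x ≠ y ∧ IncompRel r x y}) < κ :=
    (card_biUnion_lt_iff_forall_of_isRegular hκ hM_lt).2 fun x _ ↦ hsmall x
  have hcover : M ∪ ⋃ x ∈ M, {y | x ≠ y ∧ IncompRel r x y} = Set.univ := by
    refine eq_univ_of_forall fun y ↦ or_iff_not_imp_left.2 fun hy ↦ ?_
    obtain ⟨x, hxM, hxy⟩ := exists_mem_incompRel_of_isMaxChain hM hy
    exact mem_biUnion hxM hxy
  refine hα.not_gt ?_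
  calc
    #α = #(M ∪ ⋃ x ∈ M, {y | x ≠ y ∧ IncompRel r x y} : Set α) := by rw [hcover, mk_univ]
    _ ≤ #M + #(⋃ x ∈ M, {y | x ≠ y ∧ IncompRel r x y}) := mk_union_le _ _
    _ < κ := add_lt_of_lt hκ.aleph0_le hM_lt hunion

theorem exists_mem_le_mk_sep_incompRel {κ : Cardinal} (hκ : κ.IsRegular) {X : Set α}
    (hchain : ∀ C ⊆ X, IsChain r C → #C < κ) (hX : κ ≤ #X) :
    ∃ x ∈ X, κ ≤ #{y ∈ X | x ≠ y ∧ IncompRel r x y} := by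
  have hchain_coe (C : Set X) (hC : IsChain (fun a b : X ↦ r a b) C) : #C < κ := by
    rw [← mk_image_eq Subtype.val_injective]
    exact hchain _ (Subtype.coe_image_subset X C)
      (hC.image_of_map_rel _ r _ fun _ _ h ↦ h)
  obtain ⟨x, hx⟩ := exists_le_mk_incompRel hκ hchain_coe hX
  refine ⟨x, x.2, hx.trans ?_⟩
  rw [← mk_image_eq Subtype.val_injective]
  refine mk_le_mk_of_subset ?_
  rintro _ ⟨y, ⟨hne, hincomp⟩, rfl⟩
  exact ⟨y.2, Subtype.coe_ne_coe.2 hne, hincomp⟩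

theorem stmt1_general {κ : Cardinal} (hκ : κ.IsRegular)
    (hanti : ∀ A : Set α, IsAntichain r A → A.Finite)
    (hchain : ∀ C : Set α, IsChain r C → #C < κ) :
    #α < κ := by
  by_contra! hα
  obtain ⟨x, hx⟩ := exists_seq_forall_lt_of_forall_exists_sep (p := fun X : Set α ↦ κ ≤ #X)
    (X := Set.univ) (by rwa [mk_univ])
    fun _ ↦ exists_mem_le_mk_sep_incompRel hκ fun C _ ↦ hchain C
  obtain ⟨hinf, hA⟩ := infinite_and_isAntichain_range_of_forall_lt hx
  exact hinf (hanti _ hA)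

end Relation

/-- If `(P, ≤)` is a partially ordered set whose underlying set is well-orderable,
every antichain in `P` is finite, and every chain in `P` is countable, then `P` is
countable. -/
theorem stmt1 {P : Type*} [PartialOrder P]
    (hwo : ∃ r : P → P → Prop, IsWellOrder P r)
    (hanti : ∀ A : Set P, IsAntichain (· ≤ ·) A → A.Finite)
    (hchain : ∀ C : Set P, IsChain (· ≤ ·) C → C.Countable) :
    Countable P :=
  mk_le_aleph0_iff.1 <| lt_aleph_one_iff.1 <| stmt1_general isRegular_aleph_one hanti
    fun C hC ↦ lt_aleph_one_iff.2 (hchain C hC).le_aleph0
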